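/- There exists a constant C > 0 such that for all n and all k ≥ 2, the total distance under the finite uniform workload of the quasi-optimal tree of degree k+1 on n nodes exceeds the total distance of an optimal k-ary search tree on n nodes by at most C·n²·k·log k. -/

import Mathlib

/-!
Both trees are compared with `2 n² log_k n`, up to an error `O(n²)`.

*Quasi-optimal tree.* Any two nodes are at distance at most twice the height `h`, and since the
level `h - 1` is full, `k ^ (h - 1) ≤ n`. Hence the total distance is at most
`2 n² (log_k n + 1)` (`totalDistUniform_le`, `quasi_height`).

*Arbitrary `k`-ary tree.* Each edge, i.e. each non-root subtree of size `s`, separates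
`2 s (n - s)` ordered pairs of nodes, so the total distance is at least `2 ∑ s (n - s)`, the sum
being over all non-root subtrees (`le_totalDistUniform`). This sum is bounded below with a potential
`pot s` whose leading term is `n x log x / ((k - 1) log k)`, where `x = (k - 1) s + 1`. The variable
`x` is chosen because it is additive over exactly `k` (possibly empty) children. The potential of a
node of size `s ≤ n / 2` is bounded by the sum over its children of their potential plus their edge
contribution (`pot_step`): if no child holds more than `15/16` of the nodes, convexity of `x log x`
and the term `- 15 s²` suffice; otherwise the children are so unbalanced that `∑ x log x` beats its
minimum by a definite fraction, and `n ≥ 2 s` pays for the loss. Finally, descending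
from the root along the subtrees of size at least `n / 2` moves the root to a centroid, all of whose
branches have size at most `n / 2` (`cost_descend`); the potential of the part of the tree above
the current node is carried along the way.
-/

inductive KTree : Type where
  | node : ℕ → List KTree → KTree

namespace KTree

instance : Inhabited KTree := ⟨node 0 []⟩

def rootKey : KTree → ℕ
  | node x _ => x

def children : KTree → List KTree
  | node _ cs => cs

def keys : KTree → List ℕ
  | node x cs => x :: (cs.attach.map (fun c => c.1.keys)).flatten
decreasing_by
  have := List.sizeOf_lt_of_mem c.2
  simp only [KTree.node.sizeOf_spec]
  omega

def size (t : KTree) : ℕ := t.keys.length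

def height : KTree → ℕ
  | node _ cs => (cs.attach.map (fun c => c.1.height + 1)).foldr max 0
decreasing_by
  have := List.sizeOf_lt_of_mem c.2
  simp only [KTree.node.sizeOf_spec]
  omega

def countAt : KTree → ℕ → ℕ
  | node _ _, 0 => 1
  | node _ cs, d + 1 => ((cs.attach.map (fun c => c.1.countAt d)).foldr (· + ·) 0)

def countsAt : KTree → ℕ → List ℕ
  | node _ cs, 0 => [cs.length]
  | node _ cs, d + 1 => (cs.attach.map (fun c => c.1.countsAt d)).flatten

def edges : KTree → List (ℕ × ℕ)
  | node x cs => (cs.map fun c => (x, c.rootKey)) ++ (cs.attach.map (fun c => c.1.edges)).flatten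
decreasing_by
  have := List.sizeOf_lt_of_mem c.2
  simp only [KTree.node.sizeOf_spec]
  omega

def graph (t : KTree) : SimpleGraph ℕ :=
  SimpleGraph.fromRel (fun a b => (a, b) ∈ t.edges)

noncomputable def dist (t : KTree) (u v : ℕ) : ℕ := t.graph.dist u v

noncomputable def totalDist (t : KTree) (D : ℕ → ℕ → ℕ) : ℕ :=
  ∑ u ∈ t.keys.toFinset, ∑ v ∈ t.keys.toFinset, t.dist u v * D u v

noncomputable def totalDistUniform (t : KTree) : ℕ :=
  ∑ u ∈ t.keys.toFinset, ∑ v ∈ t.keys.toFinset, t.dist u v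

def DegLE (k : ℕ) : KTree → Prop
  | node _ cs => cs.length ≤ k ∧ ∀ c ∈ cs, DegLE k c

def Separated : KTree → Prop
  | node _ cs =>
      (cs.Pairwise fun a b =>
        (∀ u ∈ a.keys, ∀ v ∈ b.keys, u < v) ∨ (∀ u ∈ a.keys, ∀ v ∈ b.keys, v < u)) ∧
      ∀ c ∈ cs, Separated c

def IsKAST (k i j : ℕ) (t : KTree) : Prop :=
  t.DegLE k ∧ t.Separated ∧ t.keys.Nodup ∧ ∀ m, m ∈ t.keys ↔ m ∈ Finset.Icc i j

def WeaklyComplete (k : ℕ) (t : KTree) : Prop :=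
  t.DegLE k ∧ ∀ d, d < t.height → t.countAt d = k ^ d

def subtreeAt : KTree → List ℕ → Option KTree
  | t, [] => some t
  | node _ cs, i :: is =>
    match cs[i]? with
    | some c => subtreeAt c is
    | none => none

def replaceAt : KTree → List ℕ → KTree → KTree
  | _, [], r => r
  | node x cs, i :: is, r => node x (cs.set i (replaceAt (cs.getD i default) is r))

def attachLeaf : KTree → List ℕ → ℕ → KTree
  | node x cs, [], u => node x (cs ++ [node u []])
  | node x cs, i :: is, u => node x (cs.set i (attachLeaf (cs.getD i default) is u))

def IsSubtreeOf (s t : KTree) : Prop := ∃ pos, subtreeAt t pos = some s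

def graphAvoiding (t : KTree) (c : ℕ) : SimpleGraph ℕ :=
  SimpleGraph.fromRel (fun a b => (a, b) ∈ t.edges ∧ a ≠ c ∧ b ≠ c)

def IsCentroid (t : KTree) (c : ℕ) : Prop :=
  c ∈ t.keys ∧ ∀ w ∈ t.keys, w ≠ c →
    2 * {w' | w' ∈ t.keys ∧ (t.graphAvoiding c).Reachable w w'}.ncard ≤ t.size

def uniformDemand : ℕ → ℕ → ℕ := fun u v => if u = v then 0 else 1

def IsOptimal (k n : ℕ) (T : KTree) : Prop :=
  IsKAST k 1 n T ∧ ∀ T' : KTree, IsKAST k 1 n T' → totalDistUniform T ≤ totalDistUniform T'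

def truncate : ℕ → KTree → KTree
  | 0, node x _ => node x []
  | d + 1, node x cs => node x (cs.attach.map (fun c => truncate d c.1))

def LastLevelPartial (k : ℕ) (t : KTree) : Prop :=
  1 ≤ t.height ∧ 0 < t.countAt t.height ∧ t.countAt t.height < k * t.countAt (t.height - 1)

def Packed (k : ℕ) (t : KTree) : Prop :=
  ∀ i j : ℕ, i < j → 0 < (t.countsAt (t.height - 1)).getD j 0 →
    (t.countsAt (t.height - 1)).getD i 0 = k

def Reorder : KTree → KTree → Prop
  | node x cs, node y ds =>
      x = y ∧ ∃ e : Fin cs.length ≃ Fin ds.length,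
        ∀ i : Fin cs.length, Reorder cs[i] ds[e i]
termination_by t _ => sizeOf t
decreasing_by
  have h1 : cs[i] ∈ cs := List.getElem_mem _
  have := List.sizeOf_lt_of_mem h1
  simp only [KTree.node.sizeOf_spec]
  omega

def IsQuasiOptimal (k n : ℕ) (t : KTree) : Prop :=
  t.keys.Nodup ∧ (∀ m, m ∈ t.keys ↔ m ∈ Finset.Icc 1 n) ∧
  t.children.length = k + 1 ∧
  (∀ c ∈ t.children, WeaklyComplete k c) ∧
  (∀ d, 0 < d → d < t.height → t.countAt d = (k + 1) * k ^ (d - 1)) ∧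
  Packed k t

end KTree

open KTree

namespace KTree

/-! ### Structure of trees -/

theorem ind {P : KTree → Prop} (h : ∀ x cs, (∀ c ∈ cs, P c) → P (node x cs)) : ∀ t, P t
  | node x cs => h x cs (fun c _ => ind h c)

theorem keys_node (x : ℕ) (cs : List KTree) :
    (node x cs).keys = x :: cs.flatMap keys := by
  rw [keys, List.attach_map_val (f := keys), List.flatMap]

theorem edges_node (x : ℕ) (cs : List KTree) :
    (node x cs).edges = (cs.map fun c => (x, c.rootKey)) ++ cs.flatMap edges := by
  rw [edges, List.attach_map_val (f := edges), List.flatMap]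

theorem height_node (x : ℕ) (cs : List KTree) :
    (node x cs).height = (cs.map fun c => c.height + 1).foldr max 0 := by
  rw [height, ← List.attach_map_val (l := cs) (f := fun c => c.height + 1)]

theorem countAt_node_succ (x : ℕ) (cs : List KTree) (d : ℕ) :
    (node x cs).countAt (d + 1) = (cs.map fun c => c.countAt d).sum := by
  rw [countAt, ← List.attach_map_val (l := cs) (f := fun c => c.countAt d)]
  rfl

theorem size_node (x : ℕ) (cs : List KTree) :
    (node x cs).size = 1 + (cs.map size).sum := by
  rw [size, keys_node, List.length_cons, List.length_flatMap, add_comm]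
  rfl

theorem rootKey_mem (t : KTree) : t.rootKey ∈ t.keys := by
  cases t; simp [keys_node, rootKey]

theorem height_lt_of_mem {x : ℕ} {cs : List KTree} {c : KTree} (hc : c ∈ cs) :
    c.height + 1 ≤ (node x cs).height := by
  rw [height_node]
  induction cs with
  | nil => simp at hc
  | cons a l ih =>
    rcases List.mem_cons.1 hc with rfl | h
    · simp
    · simpa using Or.inr (ih h)

theorem countAt_le_size (t : KTree) : ∀ d, t.countAt d ≤ t.size := by
  induction t using ind with
  | h x cs ih =>
    intro d
    rw [size_node]
    cases d with
    | zero => simp [countAt]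
    | succ d =>
      rw [countAt_node_succ]
      have := List.sum_le_sum (l := cs) (f := fun c => c.countAt d) (g := size)
        (fun c hc => ih c hc d)
      omega

/-- All proper (non-root) subtrees of a tree, in preorder. They correspond to the edges. -/
def subs : KTree → List KTree
  | node _ cs => (cs.attach.map (fun c => c.1 :: c.1.subs)).flatten
decreasing_by
  have := List.sizeOf_lt_of_mem c.2
  simp only [KTree.node.sizeOf_spec]
  omega

theorem subs_node (x : ℕ) (cs : List KTree) :
    (node x cs).subs = cs.flatMap fun c => c :: c.subs := by
  rw [subs, List.flatMap, ← List.attach_map_val (l := cs) (f := fun c => c :: c.subs)]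

theorem map_rootKey_subs (t : KTree) : (t :: t.subs).map rootKey = t.keys := by
  induction t using ind with
  | h x cs ih =>
    rw [keys_node, subs_node, List.map_cons, List.map_flatMap]
    congr 1
    exact List.flatMap_congr ih

theorem keys_subset_of_mem_subs (t : KTree) :
    ∀ c ∈ t.subs, ∀ y ∈ c.keys, y ∈ t.keys.tail := by
  induction t using ind with
  | h x cs ih =>
    intro c hc y hy
    rw [subs_node, List.mem_flatMap] at hc
    obtain ⟨c', hc', hcc⟩ := hc
    rw [keys_node, List.tail_cons, List.mem_flatMap]
    refine ⟨c', hc', ?_⟩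
    rcases List.mem_cons.1 hcc with rfl | h
    · exact hy
    · exact List.mem_of_mem_tail (ih c' hc' c h y hy)

theorem mem_keys_of_mem_edges (t : KTree) :
    ∀ a b, (a, b) ∈ t.edges → a ∈ t.keys ∧ b ∈ t.keys := by
  induction t using ind with
  | h x cs ih =>
    intro a b hab
    rw [edges_node, List.mem_append, List.mem_map, List.mem_flatMap] at hab
    rw [keys_node]
    rcases hab with ⟨c, hc, h⟩ | ⟨c, hc, h⟩
    · simp only [Prod.mk.injEq] at h
      obtain ⟨rfl, rfl⟩ := h
      exact ⟨List.mem_cons_self, List.mem_cons_of_mem _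
        (List.mem_flatMap.2 ⟨c, hc, rootKey_mem c⟩)⟩
    · have := ih c hc a b h
      exact ⟨List.mem_cons_of_mem _ (List.mem_flatMap.2 ⟨c, hc, this.1⟩),
        List.mem_cons_of_mem _ (List.mem_flatMap.2 ⟨c, hc, this.2⟩)⟩

theorem nodup_node {x : ℕ} {cs : List KTree} (h : (node x cs).keys.Nodup) :
    (∀ c ∈ cs, x ∉ c.keys) ∧ (∀ c ∈ cs, c.keys.Nodup) ∧
      ∀ c ∈ cs, ∀ c' ∈ cs, ∀ y, y ∈ c.keys → y ∈ c'.keys → c = c' := by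
  rw [keys_node, List.nodup_cons, List.nodup_flatMap] at h
  obtain ⟨h1, h2, h3⟩ := h
  refine ⟨fun c hc hx => h1 (List.mem_flatMap.2 ⟨c, hc, hx⟩), h2, ?_⟩
  intro c hc c' hc' y hy hy'
  by_contra hne
  have hs : Std.Symm (Function.onFun List.Disjoint keys) := ⟨fun a b hab => hab.symm⟩
  exact h3.forall hc hc' hne hy hy'

/-- The only subtree separating the end points of an edge is the one hanging below it. -/
theorem rootKey_of_separates (t : KTree) (hn : t.keys.Nodup) :
    ∀ a b, (a, b) ∈ t.edges → ∀ c ∈ t.subs, ¬ (a ∈ c.keys ↔ b ∈ c.keys) → c.rootKey = b := by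
  induction t using ind with
  | h x cs ih =>
    intro a b hab c hc hsep
    obtain ⟨hx, hnd, hdis⟩ := nodup_node hn
    rw [subs_node, List.mem_flatMap] at hc
    obtain ⟨c', hc', hcc⟩ := hc
    have hsub : ∀ y ∈ c.keys, y ∈ c'.keys := by
      intro y hy
      rcases List.mem_cons.1 hcc with rfl | h
      · exact hy
      · exact List.mem_of_mem_tail (keys_subset_of_mem_subs c' c h y hy)
    rw [edges_node, List.mem_append, List.mem_map, List.mem_flatMap] at hab
    rcases hab with ⟨c0, hc0, h⟩ | ⟨c0, hc0, h⟩
    · simp only [Prod.mk.injEq] at h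
      obtain ⟨rfl, rfl⟩ := h
      have hxc : x ∉ c.keys := fun h => hx c' hc' (hsub _ h)
      have hb : c0.rootKey ∈ c.keys := by tauto
      obtain rfl := hdis c' hc' c0 hc0 _ (hsub _ hb) (rootKey_mem c0)
      rcases List.mem_cons.1 hcc with rfl | h
      · rfl
      · exfalso
        have h1 := keys_subset_of_mem_subs c' c h _ hb
        have h2 := hnd c' hc'
        rcases c' with ⟨z, ds⟩
        rw [keys_node] at h1 h2
        exact (List.nodup_cons.1 h2).1 h1
    · have hm := mem_keys_of_mem_edges c0 a b h
      by_cases hcase : c' = c0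
      · subst hcase
        rcases List.mem_cons.1 hcc with rfl | h'
        · exact absurd (iff_of_true hm.1 hm.2) hsep
        · exact ih c' hc' (hnd c' hc') a b h c h' hsep
      · exfalso
        apply hsep
        refine iff_of_false (fun h => hcase ?_) (fun h => hcase ?_)
        · exact hdis c' hc' c0 hc0 _ (hsub _ h) hm.1
        · exact hdis c' hc' c0 hc0 _ (hsub _ h) hm.2

/-! ### Distances -/

/-- `1` if the key set of `c` contains exactly one of `u`, `v`, and `0` otherwise. -/
def sepInd (u v : ℕ) (c : KTree) : ℕ := if (u ∈ c.keys ↔ v ∈ c.keys) then 0 else 1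

/-- The number of proper subtrees, equivalently of edges, separating `u` from `v`. -/
def sep (t : KTree) (u v : ℕ) : ℕ := (t.subs.map (sepInd u v)).sum

theorem sep_le_add (t : KTree) (u v w : ℕ) : t.sep u w ≤ t.sep u v + t.sep v w := by
  unfold sep
  rw [← List.sum_map_add]
  apply List.sum_le_sum
  intro c _
  unfold sepInd
  split_ifs <;> first | omega | tauto

theorem sep_comm (t : KTree) (u v : ℕ) : t.sep u v = t.sep v u := by
  unfold sep
  congr 2
  funext c
  simp only [sepInd, iff_comm]

theorem sep_edge (t : KTree) (hn : t.keys.Nodup) (a b : ℕ) (hab : (a, b) ∈ t.edges) :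
    t.sep a b ≤ 1 := by
  have h1 : t.sep a b ≤ ((t.subs.map rootKey).map fun y => if y = b then 1 else 0).sum := by
    unfold sep
    rw [List.map_map]
    apply List.sum_le_sum
    intro c hc
    have := rootKey_of_separates t hn a b hab c hc
    simp only [sepInd, Function.comp]
    split_ifs <;> first | omega | tauto
  have h2 : (t.subs.map rootKey).Nodup := by
    have := map_rootKey_subs t
    rw [← this, List.map_cons, List.nodup_cons] at hn
    exact hn.2
  refine h1.trans ?_
  have h3 : ∀ l : List ℕ, (l.map fun y => if y = b then 1 else 0).sum = l.count b := by
    intro l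
    induction l with
    | nil => simp
    | cons y l ih =>
      rw [List.map_cons, List.sum_cons, ih, List.count_cons]
      by_cases h : y = b <;> simp [h, add_comm]
  rw [h3]
  exact List.nodup_iff_count_le_one.1 h2 b

theorem sep_le_length (t : KTree) (hn : t.keys.Nodup) {u v : ℕ} (p : t.graph.Walk u v) :
    t.sep u v ≤ p.length := by
  induction p with
  | @nil a =>
    have : sepInd a a = fun _ => 0 := by funext c; simp [sepInd]
    simp [sep, this]
  | @cons a b c hab p ih =>
    have h1 : t.sep a b ≤ 1 := by
      rw [graph, SimpleGraph.fromRel_adj] at hab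
      rcases hab.2 with h | h
      · exact sep_edge t hn a b h
      · rw [sep_comm]; exact sep_edge t hn b a h
    have := sep_le_add t a b c
    rw [SimpleGraph.Walk.length_cons]
    omega

theorem graph_mono {x : ℕ} {cs : List KTree} {c : KTree} (hc : c ∈ cs) :
    c.graph ≤ (node x cs).graph := by
  intro a b hab
  rw [graph, SimpleGraph.fromRel_adj] at hab ⊢
  rw [edges_node]
  refine ⟨hab.1, hab.2.imp (fun h => ?_) (fun h => ?_)⟩ <;>
    exact List.mem_append_right _ (List.mem_flatMap.2 ⟨c, hc, h⟩)

theorem exists_walk (t : KTree) (hn : t.keys.Nodup) :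
    ∀ w ∈ t.keys, ∃ p : t.graph.Walk t.rootKey w, p.length ≤ t.height := by
  induction t using ind with
  | h x cs ih =>
    intro w hw
    obtain ⟨hx, hnd, hdis⟩ := nodup_node hn
    rw [keys_node, List.mem_cons, List.mem_flatMap] at hw
    rcases hw with rfl | ⟨c, hc, hw⟩
    · exact ⟨SimpleGraph.Walk.nil, Nat.zero_le _⟩
    · obtain ⟨p, hp⟩ := ih c hc (hnd c hc) w hw
      have hadj : (node x cs).graph.Adj x c.rootKey := by
        rw [graph, SimpleGraph.fromRel_adj]
        refine ⟨fun h => hx c hc (h ▸ rootKey_mem c), Or.inl ?_⟩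
        rw [edges_node]
        exact List.mem_append_left _ (List.mem_map.2 ⟨c, hc, rfl⟩)
      have := height_lt_of_mem (x := x) hc
      have hlen : (SimpleGraph.Walk.cons hadj (p.mapLe (graph_mono hc))).length =
          p.length + 1 := by simp
      exact ⟨SimpleGraph.Walk.cons hadj (p.mapLe (graph_mono hc)), hlen.trans_le (by omega)⟩

theorem exists_walk_between (t : KTree) (hn : t.keys.Nodup) {u v : ℕ} (hu : u ∈ t.keys)
    (hv : v ∈ t.keys) : ∃ p : t.graph.Walk u v, p.length ≤ 2 * t.height := by
  obtain ⟨p, hp⟩ := exists_walk t hn u hu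
  obtain ⟨q, hq⟩ := exists_walk t hn v hv
  refine ⟨p.reverse.append q, ?_⟩
  rw [SimpleGraph.Walk.length_append, SimpleGraph.Walk.length_reverse]
  omega

theorem totalDistUniform_le (t : KTree) (hn : t.keys.Nodup) :
    totalDistUniform t ≤ t.size ^ 2 * (2 * t.height) := by
  have hcard : t.keys.toFinset.card = t.size := List.toFinset_card_of_nodup hn
  have : totalDistUniform t ≤
      ∑ u ∈ t.keys.toFinset, ∑ v ∈ t.keys.toFinset, 2 * t.height := by
    refine Finset.sum_le_sum fun u hu => Finset.sum_le_sum fun v hv => ?_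
    obtain ⟨p, hp⟩ := exists_walk_between t hn (List.mem_toFinset.1 hu) (List.mem_toFinset.1 hv)
    exact (SimpleGraph.dist_le p).trans hp
  refine this.trans (le_of_eq ?_)
  simp only [Finset.sum_const, hcard, smul_eq_mul]
  ring

theorem sep_le_dist (t : KTree) (hn : t.keys.Nodup) {u v : ℕ} (hu : u ∈ t.keys)
    (hv : v ∈ t.keys) : t.sep u v ≤ t.dist u v := by
  obtain ⟨p, -⟩ := exists_walk_between t hn hu hv
  obtain ⟨q, hq⟩ := p.reachable.exists_walk_length_eq_dist
  rw [dist, ← hq]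
  exact sep_le_length t hn q

/-- The sum of `s (n - s)` over the sizes `s` of all proper subtrees. -/
def cost (n : ℝ) (t : KTree) : ℝ := (t.subs.map fun c => (c.size : ℝ) * (n - c.size)).sum

theorem cost_node (n : ℝ) (x : ℕ) (cs : List KTree) :
    cost n (node x cs) = (cs.map fun c => (c.size : ℝ) * (n - c.size) + cost n c).sum := by
  rw [cost, subs_node, List.map_flatMap, List.flatMap, List.sum_flatten, List.map_map]
  rfl

theorem keys_sublist_of_mem_subs (t : KTree) : ∀ c ∈ t.subs, c.keys.Sublist t.keys := by
  induction t using ind with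
  | h x cs ih =>
    intro c hc
    rw [subs_node, List.mem_flatMap] at hc
    obtain ⟨c', hc', hcc⟩ := hc
    rw [keys_node]
    have h1 : c'.keys.Sublist (cs.flatMap keys) :=
      List.sublist_flatten_of_mem (List.mem_map_of_mem hc')
    have h2 := h1.trans (List.sublist_cons_self x _)
    rcases List.mem_cons.1 hcc with rfl | h
    · exact h2
    · exact (ih c' hc' c h).trans h2

/-- A subset `A` of `S` separates `2 |A| (|S| - |A|)` ordered pairs of elements of `S`. -/
theorem sum_sepInd (S A : Finset ℕ) (hAS : A ⊆ S) :
    ∑ u ∈ S, ∑ v ∈ S, (if (u ∈ A ↔ v ∈ A) then (0 : ℝ) else 1) =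
      2 * ((A.card : ℝ) * (S.card - A.card)) := by
  have hf : ∑ u ∈ S, (if u ∈ A then (1 : ℝ) else 0) = A.card := by
    rw [Finset.sum_ite_mem, Finset.inter_eq_right.2 hAS]; simp
  have : ∀ u v, (if (u ∈ A ↔ v ∈ A) then (0 : ℝ) else 1) =
      (if u ∈ A then (1 : ℝ) else 0) + (if v ∈ A then (1 : ℝ) else 0)
        - 2 * ((if u ∈ A then (1 : ℝ) else 0) * (if v ∈ A then (1 : ℝ) else 0)) := by
    intro u v
    by_cases hu : u ∈ A <;> by_cases hv : v ∈ A <;> (simp [hu, hv]; try norm_num)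
  simp only [this, Finset.sum_sub_distrib, Finset.sum_add_distrib, ← Finset.mul_sum, hf,
    Finset.sum_const, nsmul_eq_mul, ← Finset.sum_mul]
  ring

theorem le_totalDistUniform (t : KTree) (hn : t.keys.Nodup) :
    2 * cost t.size t ≤ (totalDistUniform t : ℝ) := by
  have h1 : ∑ u ∈ t.keys.toFinset, ∑ v ∈ t.keys.toFinset, (t.sep u v : ℝ) ≤
      (totalDistUniform t : ℝ) := by
    unfold totalDistUniform
    push_cast
    refine Finset.sum_le_sum fun u hu => Finset.sum_le_sum fun v hv => ?_
    exact_mod_cast sep_le_dist t hn (List.mem_toFinset.1 hu) (List.mem_toFinset.1 hv)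
  refine le_trans (le_of_eq ?_) h1
  have h2 : ∀ l : List KTree, (∀ c ∈ l, c.keys.Sublist t.keys) →
      ∑ u ∈ t.keys.toFinset, ∑ v ∈ t.keys.toFinset, (((l.map (sepInd u v)).sum : ℕ) : ℝ) =
        2 * (l.map fun c => (c.size : ℝ) * (t.size - c.size)).sum := by
    intro l
    induction l with
    | nil => simp
    | cons c l ih =>
      intro hl
      have hc := hl c List.mem_cons_self
      have hA : c.keys.toFinset ⊆ t.keys.toFinset := fun y hy =>
        List.mem_toFinset.2 (hc.subset (List.mem_toFinset.1 hy))
      have h3 := sum_sepInd t.keys.toFinset c.keys.toFinset hA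
      rw [List.toFinset_card_of_nodup hn, List.toFinset_card_of_nodup (hn.sublist hc)] at h3
      have h4 : ∀ u v, (sepInd u v c : ℝ) =
          if (u ∈ c.keys.toFinset ↔ v ∈ c.keys.toFinset) then (0 : ℝ) else 1 := by
        intro u v
        simp only [sepInd, List.mem_toFinset]
        split_ifs <;> simp
      simp only [List.map_cons, List.sum_cons, Nat.cast_add, Finset.sum_add_distrib]
      rw [ih fun d hd => hl d (List.mem_cons_of_mem _ hd)]
      simp only [h4]
      rw [h3, mul_add]
      rfl
  exact (h2 t.subs (keys_sublist_of_mem_subs t)).symm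

/-! ### The potential -/

/-- `x log x` for `x = (k - 1) s + 1`. For a node with exactly `k` children, empty ones of size `0`
allowed, the value of `x` at the node is the sum of its values at the children. -/
noncomputable def phi (k s : ℝ) : ℝ := ((k - 1) * s + 1) * Real.log ((k - 1) * s + 1)

/-- The lower bound for the contribution of the edges strictly inside a subtree of size
`s ≤ n / 2`, in a tree on `n` nodes. The term `- 2 n s` pays for lower-order losses at each node, the
term `- 15 s²` for the quadratic part of `s (n - s)`. -/
noncomputable def pot (n k s : ℝ) : ℝ :=
  n / ((k - 1) * Real.log k) * phi k s - 2 * n * s - 15 * s ^ 2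

/-- The potential of a subtree together with the edge above it. -/
noncomputable def potE (n k s : ℝ) : ℝ := s * (n - s) + pot n k s

theorem pot_zero (n k : ℝ) : potE n k 0 = 0 := by simp [potE, pot, phi]

/-- The tangent inequality for the convex function `y log y` at `t`. -/
theorem tangent {y t : ℝ} (hy : 0 < y) (ht : 0 < t) :
    (Real.log t + 1) * y - t ≤ y * Real.log y := by
  have h := Real.log_le_sub_one_of_pos (div_pos ht hy)
  rw [Real.log_div ht.ne' hy.ne'] at h
  have h2 := mul_le_mul_of_nonneg_left h hy.le
  have h3 : y * (t / y - 1) = t - y := by field_simp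
  rw [h3] at h2
  linarith

/-- Tangent inequality summed over a list padded by zeros to length `m`. -/
theorem sum_phi_ge {k t : ℝ} (hk : 1 ≤ k) (ht : 0 < t) :
    ∀ (l : List ℝ) (m : ℕ), l.length ≤ m → (∀ s ∈ l, 0 ≤ s) →
      (Real.log t + 1) * ((k - 1) * l.sum + m) - m * t ≤ (l.map (phi k)).sum := by
  intro l
  induction l with
  | nil =>
    intro m _ _
    have h := tangent one_pos ht
    rw [Real.log_one] at h
    have := mul_le_mul_of_nonneg_left h (Nat.cast_nonneg (α := ℝ) m)
    simp only [List.sum_nil, List.map_nil]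
    linarith
  | cons s l ih =>
    intro m hm hs
    obtain ⟨m, rfl⟩ : ∃ m', m = m' + 1 :=
      ⟨m - 1, by rw [List.length_cons] at hm; omega⟩
    have h1 := ih m (by simpa using hm) fun r hr => hs r (List.mem_cons_of_mem _ hr)
    have hs0 := hs s List.mem_cons_self
    have hx : 0 < (k - 1) * s + 1 := by nlinarith
    have h2 := tangent hx ht
    simp only [List.sum_cons, List.map_cons, Nat.cast_add, Nat.cast_one]
    unfold phi at h1 ⊢
    linarith

theorem sum_sq_le (B : ℝ) : ∀ l : List ℝ, (∀ s ∈ l, 0 ≤ s ∧ s ≤ B) →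
    (l.map fun s => s ^ 2).sum ≤ B * l.sum := by
  intro l
  induction l with
  | nil => simp
  | cons s l ih =>
    intro h
    have h1 := ih fun r hr => h r (List.mem_cons_of_mem _ hr)
    have h2 := h s List.mem_cons_self
    simp only [List.map_cons, List.sum_cons]
    nlinarith

theorem sum_potE (n k : ℝ) (l : List ℝ) :
    (l.map (potE n k)).sum = n / ((k - 1) * Real.log k) * (l.map (phi k)).sum
      - n * l.sum - 16 * (l.map fun s => s ^ 2).sum := by
  induction l with
  | nil => simp
  | cons s l ih =>
    simp only [List.map_cons, List.sum_cons, ih, potE, pot]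
    ring

theorem half_lt_log {k : ℕ} (hk : 2 ≤ k) : 1 / 2 < Real.log k := by
  have h2 : Real.log 2 ≤ Real.log k := Real.log_le_log (by norm_num) (by exact_mod_cast hk)
  have := Real.log_two_gt_d9
  linarith

/-- A child holding at least `15/16` of the nodes makes `∑ x log x` exceed `x log x - x log k`
by at least `x log k / 2`. -/
theorem sum_phi_heavy {k : ℕ} (hk : 2 ≤ k) (M : ℝ) (l : List ℝ) (hl : l.length + 1 ≤ k)
    (h0 : ∀ s ∈ l, 0 ≤ s) (hM0 : 0 ≤ M) (hM : 15 / 16 * (1 + (M + l.sum)) ≤ M) :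
    phi k (1 + (M + l.sum)) - ((k - 1) * (1 + (M + l.sum)) + 1) * (Real.log k / 2)
      ≤ phi k M + (l.map (phi k)).sum := by
  have hkR : (2 : ℝ) ≤ k := by exact_mod_cast hk
  have hL := half_lt_log hk
  have hsum : 0 ≤ l.sum := List.sum_nonneg h0
  set s := 1 + (M + l.sum) with hs
  have hs1 : 1 ≤ s := by linarith
  obtain ⟨X, hX⟩ : ∃ X, X = ((k : ℝ) - 1) * s + 1 := ⟨_, rfl⟩
  have hXpos : 0 < X := by rw [hX]; nlinarith
  have hxM : 0 < ((k : ℝ) - 1) * M + 1 := by nlinarith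
  have hk8 : (0 : ℝ) < 8 * k := by linarith
  have ht : 0 < X / (8 * k) := by positivity
  have h1 := tangent hxM hXpos
  have h2 := sum_phi_ge (k := (k : ℝ)) (by linarith) ht l (k - 1) (by omega) h0
  rw [Nat.cast_sub (by omega), Nat.cast_one, Real.log_div hXpos.ne' hk8.ne'] at h2
  have hkt : ((k : ℝ) - 1) * (X / (8 * k)) ≤ X / 8 := by
    have : (k : ℝ) * (X / (8 * k)) = X / 8 := by field_simp
    nlinarith
  have h8 : Real.log (8 * k) ≤ 4 * Real.log k := by
    rw [Real.log_mul (by norm_num) (by positivity)]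
    have : Real.log 8 = 3 * Real.log 2 := by
      rw [show (8 : ℝ) = 2 ^ 3 by norm_num, Real.log_pow]; norm_num
    have h' : Real.log 2 ≤ Real.log k := Real.log_le_log (by norm_num) hkR
    linarith
  -- `R` is the part of `X` outside the heavy child, padding included.
  obtain ⟨R, hR⟩ : ∃ R, R = ((k : ℝ) - 1) * (s - M) := ⟨_, rfl⟩
  have hR0 : 0 ≤ R := by rw [hR]; apply mul_nonneg <;> linarith
  have hR16 : R ≤ X / 16 := by
    rw [hR, hX]
    have : ((k : ℝ) - 1) * (s - M) ≤ (k - 1) * (s / 16) :=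
      mul_le_mul_of_nonneg_left (by linarith) (by linarith)
    linarith
  have e1 : ((k : ℝ) - 1) * l.sum + (k - 1) = R := by rw [hR, hs]; ring
  have e2 : ((k : ℝ) - 1) * M + 1 = X - R := by rw [hR, hX]; ring
  rw [e1] at h2
  rw [e2] at h1
  have h3 : R * Real.log (8 * k) ≤ X / 16 * (4 * Real.log k) := by
    have h8' : 0 ≤ Real.log (8 * k) := Real.log_nonneg (by linarith)
    exact mul_le_mul hR16 h8 h8' (by positivity)
  have h4 : X * (1 / 2) ≤ X * Real.log k := mul_le_mul_of_nonneg_left hL.le hXpos.le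
  have e3 : phi k s = X * Real.log X := by rw [phi, ← hX]
  have e4 : phi k M = (X - R) * Real.log (X - R) := by rw [phi, e2]
  rw [← hX, e3, e4]
  nlinarith

/-- The sizes in `l` are those of the children of a node with at most half of the `n` nodes below or
at it. -/
theorem pot_step {k : ℕ} (hk : 2 ≤ k) (n : ℝ) (l : List ℝ) (hl : l.length ≤ k)
    (h0 : ∀ s ∈ l, 0 ≤ s) (hn : 2 * (1 + l.sum) ≤ n) :
    pot n k (1 + l.sum) ≤ (l.map (potE n k)).sum := by
  have hkR : (2 : ℝ) ≤ k := by exact_mod_cast hk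
  have hL := half_lt_log hk
  have hsum : 0 ≤ l.sum := List.sum_nonneg h0
  rw [sum_potE, pot]
  obtain ⟨s, hs⟩ : ∃ s, s = 1 + l.sum := ⟨_, rfl⟩
  rw [← hs] at hn ⊢
  have hs' : l.sum = s - 1 := by linarith
  have hs1 : 1 ≤ s := by linarith
  have hA : 0 ≤ n / (((k : ℝ) - 1) * Real.log k) := by
    apply div_nonneg (by linarith); apply mul_nonneg <;> linarith
  have hAX : n / (((k : ℝ) - 1) * Real.log k) * ((((k : ℝ) - 1) * s + 1) * Real.log k)
      ≤ n * (s + 1) := by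
    have hk1 : (0 : ℝ) < k - 1 := by linarith
    have : n / (((k : ℝ) - 1) * Real.log k) * ((((k : ℝ) - 1) * s + 1) * Real.log k)
        = n * (s + 1 / (k - 1)) := by
      field_simp
    rw [this]
    have h1 : 1 / ((k : ℝ) - 1) ≤ 1 := by rw [div_le_one hk1]; linarith
    exact mul_le_mul_of_nonneg_left (by linarith) (by linarith)
  by_cases hcase : ∃ M ∈ l, 15 / 16 * s ≤ M
  · obtain ⟨M, hMl, hM⟩ := hcase
    have hperm := List.perm_cons_erase hMl
    have hsumE : l.sum = M + (l.erase M).sum := by rw [hperm.sum_eq, List.sum_cons]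
    have hphi : (l.map (phi k)).sum = phi k M + ((l.erase M).map (phi k)).sum := by
      rw [(hperm.map _).sum_eq, List.map_cons, List.sum_cons]
    have hlen : (l.erase M).length + 1 ≤ k := by
      rw [hperm.length_eq, List.length_cons] at hl; exact hl
    have h := sum_phi_heavy hk M (l.erase M) hlen
      (fun r hr => h0 r (List.mem_of_mem_erase hr)) (h0 M hMl)
      (by rw [← hsumE, ← hs]; exact hM)
    rw [← hsumE, ← hs, ← hphi] at h
    have h2 := mul_le_mul_of_nonneg_left h hA
    have h3 := sum_sq_le s l fun r hr => ⟨h0 r hr, by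
      have := List.single_le_sum h0 r hr; linarith⟩
    rw [hs'] at h3 ⊢
    nlinarith
  · push Not at hcase
    have hX : 0 < ((k : ℝ) - 1) * s + 1 := by nlinarith
    have hkpos : (0 : ℝ) < k := by linarith
    have h := sum_phi_ge (k := (k : ℝ)) (t := (((k : ℝ) - 1) * s + 1) / k) (by linarith)
      (by positivity) l k hl h0
    rw [Real.log_div hX.ne' hkpos.ne', mul_div_cancel₀ _ hkpos.ne',
      show ((k : ℝ) - 1) * l.sum + k = (k - 1) * s + 1 by rw [hs']; ring] at h
    have h' : phi k s - (((k : ℝ) - 1) * s + 1) * Real.log k ≤ (l.map (phi k)).sum := by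
      rw [phi]; linarith
    have h2 := mul_le_mul_of_nonneg_left h' hA
    have h3 := sum_sq_le (15 / 16 * s) l fun r hr => ⟨h0 r hr, (hcase r hr).le⟩
    rw [hs'] at h3 ⊢
    nlinarith

/-- At the centroid, which may have `k + 1` branches. -/
theorem pot_root {k : ℕ} (hk : 2 ≤ k) (n : ℝ) (l : List ℝ) (hl : l.length ≤ k + 1)
    (h0 : ∀ s ∈ l, 0 ≤ s) (hn : 1 + l.sum = n) :
    n ^ 2 * (Real.log n / Real.log k) - 24 * n ^ 2 ≤ (l.map (potE n k)).sum := by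
  have hkR : (2 : ℝ) ≤ k := by exact_mod_cast hk
  have hL := half_lt_log hk
  have hL0 : 0 < Real.log k := by linarith
  have hsum : 0 ≤ l.sum := List.sum_nonneg h0
  have hn1 : 1 ≤ n := by linarith
  have hk1 : (0 : ℝ) < k - 1 := by linarith
  rw [sum_potE]
  have h := sum_phi_ge (k := (k : ℝ)) (t := n) (by linarith) (by linarith) l (k + 1) hl h0
  have hlog : 0 ≤ Real.log n := Real.log_nonneg hn1
  push_cast at h
  have hs' : l.sum = n - 1 := by linarith
  have h' : ((k : ℝ) - 1) * (n * Real.log n - 3 * n) ≤ (l.map (phi k)).sum := by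
    refine le_trans ?_ h
    rw [hs']
    have h5 : 0 ≤ (k - 2 : ℝ) * n := by apply mul_nonneg <;> linarith
    have h6 : 0 ≤ (k - 1 : ℝ) * (n - 1) := by apply mul_nonneg <;> linarith
    nlinarith
  have hA : 0 ≤ n / (((k : ℝ) - 1) * Real.log k) := by
    apply div_nonneg (by linarith); apply mul_nonneg <;> linarith
  have h2 := mul_le_mul_of_nonneg_left h' hA
  have e : n / (((k : ℝ) - 1) * Real.log k) * (((k : ℝ) - 1) * (n * Real.log n - 3 * n))
      = n ^ 2 * (Real.log n / Real.log k) - 3 * n ^ 2 * (1 / Real.log k) := by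
    field_simp
  have hinv : 1 / Real.log k ≤ 2 := by
    rw [div_le_iff₀ hL0]; linarith
  have h3 := sum_sq_le n l fun r hr => ⟨h0 r hr, by
      have := List.single_le_sum h0 r hr; linarith⟩
  rw [e] at h2
  have h4 : 3 * n ^ 2 * (1 / Real.log k) ≤ 3 * n ^ 2 * 2 :=
    mul_le_mul_of_nonneg_left hinv (by positivity)
  rw [hs'] at h3 ⊢
  nlinarith

/-! ### The lower bound for a `k`-ary tree -/

theorem degLE_node {k x : ℕ} {cs : List KTree} (h : DegLE k (node x cs)) :
    cs.length ≤ k ∧ ∀ c ∈ cs, DegLE k c := by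
  rwa [DegLE] at h

theorem size_node_real (x : ℕ) (cs : List KTree) :
    ((node x cs).size : ℝ) = 1 + (cs.map fun c => (c.size : ℝ)).sum := by
  rw [size_node]
  push_cast
  rw [List.map_map]
  rfl

theorem sizes_nonneg (cs : List KTree) : ∀ s ∈ cs.map fun c => (c.size : ℝ), 0 ≤ s := by
  intro s hs
  obtain ⟨c, -, rfl⟩ := List.mem_map.1 hs
  exact Nat.cast_nonneg _

/-- The potential is a lower bound for subtrees with at most half of the nodes. -/
theorem cost_light {k : ℕ} (hk : 2 ≤ k) (n : ℝ) (t : KTree) :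
    DegLE k t → 2 * (t.size : ℝ) ≤ n → pot n k t.size ≤ cost n t := by
  induction t using ind with
  | h x cs ih =>
    intro hd hn
    obtain ⟨hlen, hcs⟩ := degLE_node hd
    rw [size_node_real] at hn ⊢
    refine (pot_step hk n _ (by simpa using hlen) (sizes_nonneg cs) hn).trans ?_
    rw [cost_node, List.map_map]
    apply List.sum_le_sum
    intro c hc
    have hle := List.single_le_sum (sizes_nonneg cs) _ (List.mem_map_of_mem hc)
    have := ih c hc (hcs c hc) (by linarith)
    simp only [Function.comp, potE]
    linarith

theorem sum_children_ge {k : ℕ} (hk : 2 ≤ k) (n : ℝ) (cs : List KTree)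
    (hd : ∀ c ∈ cs, DegLE k c) (hs : ∀ c ∈ cs, 2 * (c.size : ℝ) ≤ n) :
    ((cs.map fun c => (c.size : ℝ)).map (potE n k)).sum ≤
      (cs.map fun c => (c.size : ℝ) * (n - c.size) + cost n c).sum := by
  rw [List.map_map]
  apply List.sum_le_sum
  intro c hc
  have := cost_light hk n c (hd c hc) (hs c hc)
  simp only [Function.comp, potE]
  linarith

/-- Here `u` is the number of nodes outside the subtree `t`, and `potE n k u` a lower bound for the
contribution of the edge above `t` and of the edges outside `t`. -/
theorem cost_descend {k : ℕ} (hk : 2 ≤ k) (n : ℝ) (t : KTree) :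
    DegLE k t → ∀ u : ℝ, 0 ≤ u → u + t.size = n →
      n ^ 2 * (Real.log n / Real.log k) - 24 * n ^ 2 ≤ cost n t + potE n k u := by
  induction t using ind with
  | h x cs ih =>
    intro hd u hu hn
    obtain ⟨hlen, hcs⟩ := degLE_node hd
    rw [size_node_real] at hn
    rw [cost_node]
    by_cases hcase : ∃ c ∈ cs, n ≤ 2 * (c.size : ℝ)
    · obtain ⟨c, hc, hbig⟩ := hcase
      obtain ⟨l1, l2, rfl⟩ := List.append_of_mem hc
      have hp : (l1 ++ c :: l2).Perm (c :: (l1 ++ l2)) := List.perm_middle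
      obtain ⟨l, hl⟩ : ∃ l, l = l1 ++ l2 := ⟨_, rfl⟩
      rw [← hl] at hp
      rw [(hp.map _).sum_eq, List.map_cons, List.sum_cons] at hn ⊢
      rw [hp.length_eq, List.length_cons] at hlen
      have hmem : ∀ d ∈ l, d ∈ l1 ++ c :: l2 := fun d hd =>
        hp.mem_iff.2 (List.mem_cons_of_mem _ hd)
      have hl0 := sizes_nonneg l
      have h1 := sum_children_ge hk n l (fun d hd => hcs d (hmem d hd)) (fun d hd => by
        have := List.single_le_sum hl0 _ (List.mem_map_of_mem hd)
        linarith)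
      -- Seen from `c`, the current node has as children the other children and the part above.
      have h2 := pot_step hk n (u :: l.map fun c => (c.size : ℝ)) (by simpa using hlen)
        (by
          intro r hr
          rcases List.mem_cons.1 hr with rfl | hr
          · exact hu
          · exact hl0 r hr)
        (by rw [List.sum_cons]; linarith)
      rw [List.sum_cons, List.map_cons, List.sum_cons] at h2
      have h3 := ih c hc (hcs c hc) (1 + (u + (l.map fun c => (c.size : ℝ)).sum))
        (by have := List.sum_nonneg hl0; linarith) (by linarith)
      have h4 : potE n k (1 + (u + (l.map fun c => (c.size : ℝ)).sum)) =
          (c.size : ℝ) * (n - c.size) + pot n k (1 + (u + (l.map fun c => (c.size : ℝ)).sum)) := by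
        rw [potE]
        congr 1
        have : 1 + (u + (l.map fun c => (c.size : ℝ)).sum) = n - c.size := by linarith
        rw [this]
        ring
      linarith
    · push Not at hcase
      have h1 := sum_children_ge hk n cs hcs fun c hc => (hcase c hc).le
      have hl0 := sizes_nonneg cs
      have h2 := pot_root hk n (u :: cs.map fun c => (c.size : ℝ)) (by simpa using hlen)
        (by
          intro r hr
          rcases List.mem_cons.1 hr with rfl | hr
          · exact hu
          · exact hl0 r hr)
        (by rw [List.sum_cons]; linarith)
      rw [List.map_cons, List.sum_cons] at h2
      linarith

/-! ### The upper bound for the quasi-optimal tree -/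

theorem size_eq {n : ℕ} {t : KTree} (hn : t.keys.Nodup)
    (h : ∀ m, m ∈ t.keys ↔ m ∈ Finset.Icc 1 n) : t.size = n := by
  have : t.keys.toFinset = Finset.Icc 1 n := by
    ext m; rw [List.mem_toFinset]; exact h m
  rw [size, ← List.toFinset_card_of_nodup hn, this, Nat.card_Icc]
  omega

theorem size_pos (t : KTree) : 1 ≤ t.size := List.length_pos_of_mem (rootKey_mem t)

theorem quasi_height {k : ℕ} (hk : 2 ≤ k) (t : KTree)
    (h : ∀ d, 0 < d → d < t.height → t.countAt d = (k + 1) * k ^ (d - 1)) :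
    (t.height : ℝ) ≤ Real.log t.size / Real.log k + 1 := by
  have hL := half_lt_log hk
  have hkey : k ^ (t.height - 1) ≤ t.size := by
    rcases Nat.lt_or_ge t.height 2 with h2 | h2
    · rw [show t.height - 1 = 0 by omega, pow_zero]; exact size_pos t
    · obtain ⟨m, hm⟩ : ∃ m, t.height = m + 2 := ⟨t.height - 2, by omega⟩
      have h3 := h (m + 1) (by omega) (by omega)
      have h4 := countAt_le_size t (m + 1)
      rw [h3, Nat.add_sub_cancel] at h4
      rw [hm, show m + 2 - 1 = m + 1 by omega, pow_succ, mul_comm]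
      exact (Nat.mul_le_mul_right _ (Nat.le_succ k)).trans h4
  have h1 : Real.log ((k : ℝ) ^ (t.height - 1)) ≤ Real.log t.size := by
    apply Real.log_le_log
    · positivity
    · exact_mod_cast hkey
  rw [Real.log_pow] at h1
  have h2 : ((t.height - 1 : ℕ) : ℝ) ≤ Real.log t.size / Real.log k := by
    rwa [le_div_iff₀ (by linarith)]
  have h3 : (t.height : ℝ) ≤ ((t.height - 1 : ℕ) : ℝ) + 1 := by
    exact_mod_cast (by omega : t.height ≤ t.height - 1 + 1)
  linarith

end KTree

/-- there is a constant `C > 0` such that for all `n` and all `k ≥ 2`, the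
total distance under the finite uniform workload of the quasi-optimal tree of degree
`k+1` on `n` nodes exceeds the total distance of an optimal `k`-ary search tree on `n`
nodes by at most `C·n²·k·log k`. -/
theorem quasiOptimal_close_to_optimal :
    ∃ C : ℝ, 0 < C ∧ ∀ (n k : ℕ), 2 ≤ k →
      ∀ T Q : KTree, IsOptimal k n T → IsQuasiOptimal k n Q →
        (totalDistUniform Q : ℝ) ≤
          (totalDistUniform T : ℝ) + C * (n : ℝ) ^ 2 * (k : ℝ) * Real.log (k : ℝ) := by
  refine ⟨50, by norm_num, ?_⟩
  rintro n k hk T Q ⟨⟨hTdeg, -, hTnd, hTkeys⟩, -⟩ ⟨hQnd, hQkeys, -, -, hQcount, -⟩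
  have hTs := size_eq hTnd hTkeys
  have hQs := size_eq hQnd hQkeys
  have hT := le_totalDistUniform T hTnd
  have hT2 := cost_descend hk (n : ℝ) T hTdeg 0 le_rfl (by rw [hTs, zero_add])
  rw [pot_zero, add_zero] at hT2
  rw [hTs] at hT
  have hQ : (totalDistUniform Q : ℝ) ≤ (n : ℝ) ^ 2 * (2 * Q.height) := by
    have := totalDistUniform_le Q hQnd
    rw [hQs] at this
    exact_mod_cast this
  have hQ2 := quasi_height hk Q hQcount
  rw [hQs] at hQ2
  have hkL : 1 ≤ (k : ℝ) * Real.log k := by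
    have h1 : (2 : ℝ) ≤ k := by exact_mod_cast hk
    have h2 := half_lt_log hk
    nlinarith
  have hn2 : (0 : ℝ) ≤ (n : ℝ) ^ 2 := by positivity
  have h1 := mul_le_mul_of_nonneg_left hQ2 hn2
  have h2 := mul_le_mul_of_nonneg_left hkL hn2
  nlinarith
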